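/- Fix real u, v, w with |u|, |v|, |w| sufficiently small, and for 0 < z < 1 let Φ_0^*(z) = ∑_{k ≥ n+s, n ≥ s ≥ 1} G_0^*(k,n,s;z) u^{k−n−s} v^{n−s} w^{s−1}. Then Φ_0^* satisfies the differential equation z²(1−z²)(Φ_0^*)''(z) + [(1−u)z(1−z²) − vz](Φ_0^*)'(z) + (uv−w)Φ_0^*(z) = z on (0,1). -/

import Mathlib

open scoped BigOperators

/-- The multiple `t`-value of an index `K = (k₁, …, kₙ)` (a list of positive integers):
`t(K) = ∑_{m₁ > ⋯ > mₙ > 0, all mᵢ odd} 1 / (m₁^{k₁} ⋯ mₙ^{kₙ})`. -/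
noncomputable def multT (K : List ℕ) : ℝ :=
  ∑' m : Fin K.length → ℕ,
    if (∀ i, Odd (m i)) ∧ (∀ i j : Fin K.length, i < j → m j < m i) then
      ∏ i, ((m i : ℝ) ^ K.get i)⁻¹
    else 0

/-- The multiple `t`-star value of an index `K = (k₁, …, kₙ)`:
`t*(K) = ∑_{m₁ ≥ ⋯ ≥ mₙ > 0, all mᵢ odd} 1 / (m₁^{k₁} ⋯ mₙ^{kₙ})`. -/
noncomputable def multTStar (K : List ℕ) : ℝ :=
  ∑' m : Fin K.length → ℕ,
    if (∀ i, Odd (m i)) ∧ (∀ i j : Fin K.length, i < j → m j ≤ m i) then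
      ∏ i, ((m i : ℝ) ^ K.get i)⁻¹
    else 0

/-- An index (list of positive integers) is admissible if its first entry is `> 1`. -/
def Admissible (K : List ℕ) : Prop := (∀ i ∈ K, 1 ≤ i) ∧ 2 ≤ K.headI

instance : DecidablePred Admissible := fun K =>
  inferInstanceAs (Decidable ((∀ i ∈ K, 1 ≤ i) ∧ 2 ≤ K.headI))

/-- `G0h k n s` is the sum of multiple `t`-values over all admissible indices of
weight `k`, depth `n` and height `s`. -/
noncomputable def G0h (k n s : ℕ) : ℝ :=
  ∑' K : List ℕ,
    if Admissible K ∧ K.sum = k ∧ K.length = n ∧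
        K.countP (fun i => decide (2 ≤ i)) = s then
      multT K
    else 0

/-- `G0hStar k n s` is the sum of multiple `t`-star values over all admissible indices of
weight `k`, depth `n` and height `s`. -/
noncomputable def G0hStar (k n s : ℕ) : ℝ :=
  ∑' K : List ℕ,
    if Admissible K ∧ K.sum = k ∧ K.length = n ∧
        K.countP (fun i => decide (2 ≤ i)) = s then
      multTStar K
    else 0

/-- `G0d k n` is the sum of multiple `t`-values over all admissible indices of
weight `k` and depth `n`. -/
noncomputable def G0d (k n : ℕ) : ℝ :=
  ∑' K : List ℕ,
    if Admissible K ∧ K.sum = k ∧ K.length = n then multT K else 0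

/-- `G0dStar k n` is the sum of multiple `t`-star values over all admissible indices of
weight `k` and depth `n`. -/
noncomputable def G0dStar (k n : ℕ) : ℝ :=
  ∑' K : List ℕ,
    if Admissible K ∧ K.sum = k ∧ K.length = n then multTStar K else 0

/-- The single `t`-value `t(n) = ∑_{m odd, m > 0} 1 / m^n`. -/
noncomputable def tval (n : ℕ) : ℝ := ∑' m : ℕ, 1 / (2 * (m : ℝ) + 1) ^ n

/-- The ascending Pochhammer symbol `(a)ₙ = a (a+1) ⋯ (a+n-1)`. -/
noncomputable def poch (a : ℂ) (n : ℕ) : ℂ := ∏ i ∈ Finset.range n, (a + i)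

/-- The generalized hypergeometric function `₃F₂(a, b, c; d, e; z)`. -/
noncomputable def hyp3F2 (a b c d e z : ℂ) : ℂ :=
  ∑' n : ℕ, poch a n * poch b n * poch c n /
      ((n.factorial : ℂ) * poch d n * poch e n) * z ^ n

/-- The generalized hypergeometric function with upper parameters `as` and lower
parameters `bs`. -/
noncomputable def hypF (as bs : List ℂ) (z : ℂ) : ℂ :=
  ∑' n : ℕ, (as.map fun a => poch a n).prod /
      ((n.factorial : ℂ) * (bs.map fun b => poch b n).prod) * z ^ n

/-- The one-variable multiple polylogarithm
`L_K(z) = ∑_{m₁ > ⋯ > mₙ > 0, all mᵢ odd} z^{m₁} / (m₁^{k₁} ⋯ mₙ^{kₙ})`. -/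
noncomputable def Lt (K : List ℕ) (z : ℝ) : ℝ :=
  ∑' m : Fin K.length → ℕ,
    if h : (∀ i, Odd (m i)) ∧ (∀ i j : Fin K.length, i < j → m j < m i) ∧
        0 < K.length then
      z ^ (m ⟨0, h.2.2⟩) * ∏ i, ((m i : ℝ) ^ K.get i)⁻¹
    else 0

/-- The one-variable star multiple polylogarithm
`L*_K(z) = ∑_{m₁ ≥ ⋯ ≥ mₙ > 0, all mᵢ odd} z^{m₁} / (m₁^{k₁} ⋯ mₙ^{kₙ})`. -/
noncomputable def LtStar (K : List ℕ) (z : ℝ) : ℝ :=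
  ∑' m : Fin K.length → ℕ,
    if h : (∀ i, Odd (m i)) ∧ (∀ i j : Fin K.length, i < j → m j ≤ m i) ∧
        0 < K.length then
      z ^ (m ⟨0, h.2.2⟩) * ∏ i, ((m i : ℝ) ^ K.get i)⁻¹
    else 0

/-- `G0hz k n s z` is the sum of `L_K(z)` over all admissible indices `K` of
weight `k`, depth `n` and height `s`. -/
noncomputable def G0hz (k n s : ℕ) (z : ℝ) : ℝ :=
  ∑' K : List ℕ,
    if Admissible K ∧ K.sum = k ∧ K.length = n ∧
        K.countP (fun i => decide (2 ≤ i)) = s then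
      Lt K z
    else 0

/-- `G0hzStar k n s z` is the sum of `L*_K(z)` over all admissible indices `K` of
weight `k`, depth `n` and height `s`. -/
noncomputable def G0hzStar (k n s : ℕ) (z : ℝ) : ℝ :=
  ∑' K : List ℕ,
    if Admissible K ∧ K.sum = k ∧ K.length = n ∧
        K.countP (fun i => decide (2 ≤ i)) = s then
      LtStar K z
    else 0

/-! In the star sum of an index, single out the largest summation variable `m = 2 i + 1`. Weighting
the entries of an index multiplicatively, the sum over all choices of the remaining entries becomes
a product of geometric series, `∏ j ≤ i, (1 - X j)⁻¹`, where `X j` is the total weight of one entry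
placed at `2 j + 1`. For the weights `u`, `v`, `w` of the theorem,
`1 - X j = ((m - u) * (m - v) - w) / (m * (m - u))` with `m = 2 j + 1`, so the coefficients of
`Φ₀*` satisfy a two-term recurrence, which is the differential equation. -/

section PowerSeries

variable {ι 𝕜 : Type*} [RCLike 𝕜] {a : ι → 𝕜} {e : ι → ℕ} {F : 𝕜 → 𝕜} {R : ℝ}

lemma nat_mul_pow_pred_mul_sub_le_pow {r s : ℝ} (hr : 0 ≤ r) (hrs : r ≤ s) (n : ℕ) :
    n * r ^ (n - 1) * (s - r) ≤ s ^ n := by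
  have hterm : ∀ i ∈ Finset.range n, r ^ (n - 1) ≤ s ^ i * r ^ (n - 1 - i) := by
    intro i hi
    have hi : i ≤ n - 1 := Nat.le_sub_one_of_lt (Finset.mem_range.1 hi)
    calc r ^ (n - 1) = r ^ i * r ^ (n - 1 - i) := by rw [← pow_add, Nat.add_sub_cancel' hi]
      _ ≤ s ^ i * r ^ (n - 1 - i) := by gcongr
  have hsum : n * r ^ (n - 1) ≤ ∑ i ∈ Finset.range n, s ^ i * r ^ (n - 1 - i) := by
    simpa using Finset.card_nsmul_le_sum _ _ _ hterm
  calc n * r ^ (n - 1) * (s - r)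
      ≤ (∑ i ∈ Finset.range n, s ^ i * r ^ (n - 1 - i)) * (s - r) := by
        gcongr
    _ = s ^ n - r ^ n := (Commute.all s r).geom_sum₂_mul n
    _ ≤ s ^ n := sub_le_self _ (pow_nonneg hr n)

lemma norm_mul_natCast_mul_pow_pred_le {r s : ℝ} (hrs : r < s) (a y : 𝕜) (hy : ‖y‖ ≤ r) (n : ℕ) :
    ‖a * n * y ^ (n - 1)‖ ≤ ‖a * (s : 𝕜) ^ n‖ / (s - r) := by
  have hr : 0 ≤ r := (norm_nonneg y).trans hy
  rw [le_div_iff₀ (sub_pos.2 hrs), norm_mul, norm_mul, norm_mul, norm_pow, norm_pow,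
    RCLike.norm_natCast, RCLike.norm_of_nonneg (hr.trans hrs.le)]
  calc ‖a‖ * n * ‖y‖ ^ (n - 1) * (s - r) = ‖a‖ * (n * ‖y‖ ^ (n - 1) * (s - r)) := by ring
    _ ≤ ‖a‖ * (n * r ^ (n - 1) * (s - r)) := by
      gcongr
    _ ≤ ‖a‖ * s ^ n := by
      gcongr; exact nat_mul_pow_pred_mul_sub_le_pow hr hrs.le n

theorem hasSum_deriv_of_hasSum_mul_pow
    (hF : ∀ x, ‖x‖ < R → HasSum (fun i => a i * x ^ e i) (F x)) {x : 𝕜} (hx : ‖x‖ < R) :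
    HasSum (fun i => a i * e i * x ^ (e i - 1)) (deriv F x) := by
  obtain ⟨r, hxr, hrR⟩ := exists_between hx
  obtain ⟨s, hrs, hsR⟩ := exists_between hrR
  have hs0 : 0 ≤ s := (norm_nonneg x).trans (hxr.trans hrs).le
  have hmaj : Summable fun i => ‖a i * (s : 𝕜) ^ e i‖ / (s - r) :=
    (hF s (by rwa [RCLike.norm_of_nonneg hs0])).summable.norm.div_const _
  have hbound (i : ι) (y : 𝕜) (hy : y ∈ Metric.ball 0 r) :
      ‖a i * e i * y ^ (e i - 1)‖ ≤ ‖a i * (s : 𝕜) ^ e i‖ / (s - r) :=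
    norm_mul_natCast_mul_pow_pred_le hrs _ _ (mem_ball_zero_iff.1 hy).le _
  have hxball : x ∈ Metric.ball (0 : 𝕜) r := mem_ball_zero_iff.2 hxr
  have hderiv : HasDerivAt (fun y => ∑' i, a i * y ^ e i)
      (∑' i, a i * e i * x ^ (e i - 1)) x :=
    hasDerivAt_tsum_of_isPreconnected hmaj Metric.isOpen_ball
      (convex_ball (0 : 𝕜) r).isPreconnected
      (fun i y _ => by simpa only [mul_assoc] using (hasDerivAt_pow (e i) y).const_mul (a i))
      hbound hxball (hF x hx).summable hxball
  have hFeq : F =ᶠ[nhds x] fun y => ∑' i, a i * y ^ e i :=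
    Filter.eventuallyEq_of_mem (Metric.isOpen_ball.mem_nhds hxball) fun y hy =>
      (hF y ((mem_ball_zero_iff.1 hy).trans hrR)).tsum_eq.symm
  rw [hFeq.deriv_eq, hderiv.deriv]
  exact (hmaj.of_norm_bounded fun i => hbound i x hxball).hasSum

theorem hasSum_mul_deriv_of_hasSum_mul_pow
    (hF : ∀ x, ‖x‖ < R → HasSum (fun i => a i * x ^ e i) (F x)) {x : 𝕜} (hx : ‖x‖ < R) :
    HasSum (fun i => e i * (a i * x ^ e i)) (x * deriv F x) := by
  refine ((hasSum_deriv_of_hasSum_mul_pow hF hx).mul_left x).congr_fun fun i => ?_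
  rcases e i with _ | n
  · simp
  · rw [Nat.add_sub_cancel, pow_succ]; ring

theorem hasSum_sq_mul_deriv_deriv_of_hasSum_mul_pow
    (hF : ∀ x, ‖x‖ < R → HasSum (fun i => a i * x ^ e i) (F x)) {x : 𝕜} (hx : ‖x‖ < R) :
    HasSum (fun i => e i * (e i - 1) * (a i * x ^ e i)) (x ^ 2 * deriv (deriv F) x) := by
  have hF' := fun y hy => hasSum_deriv_of_hasSum_mul_pow hF (x := y) hy
  refine ((hasSum_deriv_of_hasSum_mul_pow hF' hx).mul_left (x ^ 2)).congr_fun fun i => ?_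
  rcases e i with _ | _ | n
  · simp
  · simp
  · simp only [Nat.add_sub_cancel]; push_cast; ring

-- With `θ = z d/dz` the equation reads `((θ - u) (θ - v) - w) F - z ^ 2 θ (θ - u) F = z`; the
-- recurrence compares the coefficients of `z ^ (2 * i + 3)`.
theorem differential_equation_of_recurrence {a : ℕ → 𝕜} {u v w : 𝕜}
    (hF : ∀ x, ‖x‖ < R → HasSum (fun i => a i * x ^ (2 * i + 1)) (F x))
    (h0 : a 0 * ((1 - u) * (1 - v) - w) = 1)
    (hsucc : ∀ i : ℕ, a (i + 1) * ((2 * i + 3 - u) * (2 * i + 3 - v) - w) =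
      a i * ((2 * i + 1) * (2 * i + 1 - u))) {z : 𝕜} (hz : ‖z‖ < R) :
    z ^ 2 * (1 - z ^ 2) * deriv (deriv F) z
      + ((1 - u) * z * (1 - z ^ 2) - v * z) * deriv F z + (u * v - w) * F z = z := by
  have h₁ := hasSum_mul_deriv_of_hasSum_mul_pow hF hz
  have h₂ := hasSum_sq_mul_deriv_deriv_of_hasSum_mul_pow hF hz
  have hlow : HasSum (fun i : ℕ => a i * ((2 * i + 1 - u) * (2 * i + 1 - v) - w) * z ^ (2 * i + 1))
      (z ^ 2 * deriv (deriv F) z + (1 - u - v) * (z * deriv F z) + (u * v - w) * F z) :=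
    ((h₂.add (h₁.mul_left (1 - u - v))).add ((hF z hz).mul_left (u * v - w))).congr_fun
      fun i => by push_cast; ring
  have hhigh : HasSum
      (fun i : ℕ => a (i + 1) * ((2 * i + 3 - u) * (2 * i + 3 - v) - w) * z ^ (2 * (i + 1) + 1))
      (z ^ 2 * (z ^ 2 * deriv (deriv F) z + (1 - u) * (z * deriv F z))) :=
    ((h₂.add (h₁.mul_left (1 - u))).mul_left (z ^ 2)).congr_fun
      fun i => by rw [hsucc]; push_cast; ring
  have htail := (hasSum_nat_add_iff' 1).2 hlow
  have hcompare := htail.unique (hhigh.congr_fun fun i => by push_cast; ring)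
  simp only [Finset.sum_range_one, Nat.cast_zero, mul_zero, zero_add, pow_one, h0] at hcompare
  linear_combination hcompare

end PowerSeries

section ListSums

open scoped ENNReal

variable {α : Type*}

lemma injective_prod_cons : Function.Injective fun p : α × List α => p.1 :: p.2 :=
  fun _ _ hpq => Prod.ext (List.cons.inj hpq).1 (List.cons.inj hpq).2

theorem hasSum_list_of_hasSum_cons {M : Type*} [AddCommMonoid M] [TopologicalSpace M]
    [ContinuousAdd M] {f : List α → M} {s : M}
    (h : HasSum (fun p : α × List α => f (p.1 :: p.2)) s) : HasSum f (f [] + s) := by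
  have hcompl : IsCompl {[]} (Set.range fun p : α × List α => p.1 :: p.2) := by
    constructor
    · simp
    · rw [codisjoint_iff_le_sup]
      rintro (_ | ⟨a, L⟩) <;> simp
  exact (hasSum_unique (f ∘ ((↑) : ({[]} : Set (List α)) → List α))).add_isCompl hcompl
    (injective_prod_cons.hasSum_range_iff.2 h)

lemma tsum_list_le_of_cons_le {f g : List α → ℝ≥0∞} {r : α → ℝ≥0∞} {C : ℝ≥0∞}
    (hnil : f [] ≤ g []) (hcons : ∀ a L, f (a :: L) ≤ g (a :: L) + r a * f L)
    (hC : ∑' L, g L + (∑' a, r a) * C ≤ C) : ∑' L, f L ≤ C := by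
  have tsum_list (h : List α → ℝ≥0∞) :
      ∑' L, h L = h [] + ∑' p : α × List α, h (p.1 :: p.2) :=
    (hasSum_list_of_hasSum_cons ENNReal.summable.hasSum).tsum_eq
  have tsum_mul (h : List α → ℝ≥0∞) :
      ∑' p : α × List α, r p.1 * h p.2 = (∑' a, r a) * ∑' L, h L := by
    rw [ENNReal.tsum_prod', ← ENNReal.tsum_mul_right]
    simp only [ENNReal.tsum_mul_left]
  have htrunc (n : ℕ) : ∑' L, (if L.length < n then f L else 0) ≤ C := by
    induction n with
    | zero => simp
    | succ n ih =>
      calc ∑' L, (if L.length < n + 1 then f L else 0)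
          = f [] + ∑' p : α × List α, (if p.2.length < n then f (p.1 :: p.2) else 0) := by
            simp [tsum_list]
        _ ≤ g [] + ∑' p : α × List α,
              (g (p.1 :: p.2) + r p.1 * if p.2.length < n then f p.2 else 0) := by
            gcongr with p
            split_ifs
            · exact hcons _ _
            · exact zero_le
        _ = ∑' L, g L + (∑' a, r a) * ∑' L, (if L.length < n then f L else 0) := by
            rw [ENNReal.tsum_add, ← add_assoc, ← tsum_list g,
              tsum_mul fun L => if L.length < n then f L else 0]
        _ ≤ ∑' L, g L + (∑' a, r a) * C := by gcongr
        _ ≤ C := hC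
  rw [ENNReal.tsum_eq_iSup_sum]
  refine iSup_le fun S => ?_
  calc ∑ L ∈ S, f L = ∑ L ∈ S, (if L.length < S.sup List.length + 1 then f L else 0) :=
        Finset.sum_congr rfl fun L hL => (if_pos (Nat.lt_succ_of_le (Finset.le_sup hL))).symm
    _ ≤ ∑' L, (if L.length < S.sup List.length + 1 then f L else 0) := ENNReal.sum_le_tsum S
    _ ≤ C := htrunc _

variable {𝕜 : Type*} [NormedField 𝕜] {f g : List α → 𝕜} {r : α → 𝕜}

lemma one_sub_tsum_ne_zero (hr : Summable fun a => ‖r a‖) (hr1 : ∑' a, ‖r a‖ < 1) :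
    1 - ∑' a, r a ≠ 0 := by
  refine sub_ne_zero.2 fun h => (norm_tsum_le_tsum_norm hr).not_gt ?_
  rwa [← h, norm_one]

lemma summable_norm_list_of_cons (hnil : f [] = g [])
    (hcons : ∀ a L, f (a :: L) = g (a :: L) + r a * f L) (hg : Summable fun L => ‖g L‖)
    (hr : Summable fun a => ‖r a‖) (hr1 : ∑' a, ‖r a‖ < 1) : Summable fun L => ‖f L‖ := by
  have tsum_enorm {β : Type _} {h : β → 𝕜} (hh : Summable fun b => ‖h b‖) :
      ∑' b, ‖h b‖ₑ = ENNReal.ofReal (∑' b, ‖h b‖) := by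
    rw [ENNReal.ofReal_tsum_of_nonneg (fun _ => norm_nonneg _) hh]
    simp only [ofReal_norm]
  set G := ∑' L, ‖g L‖
  set ρ := ∑' a, ‖r a‖
  have hG : 0 ≤ G := tsum_nonneg fun _ => norm_nonneg _
  have hρ : 0 ≤ ρ := tsum_nonneg fun _ => norm_nonneg _
  have hC : ∑' L, ‖g L‖ₑ + (∑' a, ‖r a‖ₑ) * ENNReal.ofReal (G / (1 - ρ)) ≤
      ENNReal.ofReal (G / (1 - ρ)) := by
    have hρ' : 0 < 1 - ρ := sub_pos.2 hr1
    rw [tsum_enorm hg, tsum_enorm hr, ← ENNReal.ofReal_mul hρ,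
      ← ENNReal.ofReal_add hG (by positivity)]
    refine (congrArg ENNReal.ofReal ?_).le
    field_simp
    ring
  rw [← tsum_enorm_ne_top_iff_summable_norm]
  refine ne_top_of_le_ne_top ENNReal.ofReal_ne_top (tsum_list_le_of_cons_le ?_ (fun a L => ?_) hC)
  · rw [hnil]
  · rw [hcons, ← enorm_mul]
    exact enorm_add_le _ _

theorem hasSum_list_of_cons [CompleteSpace 𝕜] (hnil : f [] = g [])
    (hcons : ∀ a L, f (a :: L) = g (a :: L) + r a * f L) (hg : Summable fun L => ‖g L‖)
    (hr : Summable fun a => ‖r a‖) (hr1 : ∑' a, ‖r a‖ < 1) :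
    HasSum f ((1 - ∑' a, r a)⁻¹ * ∑' L, g L) := by
  have hf := summable_norm_list_of_cons hnil hcons hg hr hr1
  have hgcons := hg.of_norm.comp_injective injective_prod_cons
  have hg_eq : ∑' L, g L = g [] + ∑' p : α × List α, g (p.1 :: p.2) :=
    (hasSum_list_of_hasSum_cons hgcons.hasSum).tsum_eq
  have hrf := hr.of_norm.hasSum.mul hf.of_norm.hasSum (summable_mul_of_summable_norm hr hf)
  have hf_eq : ∑' L, f L = ∑' L, g L + (∑' a, r a) * ∑' L, f L := by
    have hfcons := (hgcons.hasSum.add hrf).congr_fun fun p => hcons p.1 p.2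
    refine (hasSum_list_of_hasSum_cons hfcons).tsum_eq.trans ?_
    rw [hnil, hg_eq, add_assoc]
    rfl
  have hvalue : (1 - ∑' a, r a)⁻¹ * ∑' L, g L = ∑' L, f L := by
    rw [inv_mul_eq_iff_eq_mul₀ (one_sub_tsum_ne_zero hr hr1)]
    linear_combination -hf_eq
  exact hvalue ▸ hf.of_norm.hasSum

end ListSums

section StarSum

variable {α R : Type*}

/-- The truncated star sum `∑ t a₁ j₁ ⋯ t aₙ jₙ` over `i > j₁ ≥ ⋯ ≥ jₙ ≥ 0`, for a list
`[a₁, …, aₙ]`. -/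
def starSum [Semiring R] (t : α → ℕ → R) : List α → ℕ → R
  | [], _ => 1
  | a :: L, i => ∑ j ∈ Finset.range i, t a j * starSum t L (j + 1)

lemma starSum_zero_of_ne_nil [Semiring R] (t : α → ℕ → R) {L : List α} (hL : L ≠ []) :
    starSum t L 0 = 0 := by
  cases L with
  | nil => exact absurd rfl hL
  | cons a L => simp [starSum]

lemma starSum_cons_succ [Semiring R] (t : α → ℕ → R) (a : α) (L : List α) (i : ℕ) :
    starSum t (a :: L) (i + 1) = starSum t (a :: L) i + t a i * starSum t L (i + 1) := by
  simp only [starSum, Finset.sum_range_succ]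

lemma starSum_nonneg [Semiring R] [PartialOrder R] [IsOrderedRing R] {t : α → ℕ → R}
    (ht : ∀ a j, 0 ≤ t a j) (L : List α) (i : ℕ) : 0 ≤ starSum t L i := by
  induction L generalizing i with
  | nil => exact zero_le_one
  | cons a L ih => exact Finset.sum_nonneg fun j _ => mul_nonneg (ht a j) (ih _)

lemma starSum_smul [CommSemiring R] (x : α → R) (t : α → ℕ → R) (L : List α) (i : ℕ) :
    starSum (fun a j => x a * t a j) L i = (L.map x).prod * starSum t L i := by
  induction L generalizing i with
  | nil => simp [starSum]
  | cons a L ih =>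
    simp only [starSum, ih, List.map_cons, List.prod_cons, Finset.mul_sum]
    exact Finset.sum_congr rfl fun j _ => by ring

variable {𝕜 : Type*} [NormedField 𝕜] {t : α → ℕ → 𝕜}

lemma summable_norm_starSum (ht : ∀ j, Summable fun a => ‖t a j‖)
    (ht1 : ∀ j, ∑' a, ‖t a j‖ < 1) (i : ℕ) : Summable fun L => ‖starSum t L i‖ := by
  induction i with
  | zero =>
    refine (hasSum_single [] fun L hL => ?_).summable
    rw [starSum_zero_of_ne_nil t hL, norm_zero]
  | succ i ih =>
    exact summable_norm_list_of_cons (g := fun L => starSum t L i) rfl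
      (fun a L => starSum_cons_succ t a L i) ih (ht i) (ht1 i)

theorem hasSum_starSum [CompleteSpace 𝕜] (ht : ∀ j, Summable fun a => ‖t a j‖)
    (ht1 : ∀ j, ∑' a, ‖t a j‖ < 1) (i : ℕ) :
    HasSum (fun L => starSum t L i) (∏ j ∈ Finset.range i, (1 - ∑' a, t a j)⁻¹) := by
  induction i with
  | zero =>
    rw [Finset.prod_range_zero]
    exact hasSum_single [] fun L hL => starSum_zero_of_ne_nil t hL
  | succ i ih =>
    rw [Finset.prod_range_succ, mul_comm, ← ih.tsum_eq]
    exact hasSum_list_of_cons rfl (fun a L => starSum_cons_succ t a L i)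
      (summable_norm_starSum ht ht1 i) (ht i) (ht1 i)

end StarSum

section Polylogarithm

variable {α : Type*}

lemma antitone_finCons_iff {n a : ℕ} {j : Fin n → ℕ} :
    Antitone (Fin.cons a j : Fin (n + 1) → ℕ) ↔ Antitone j ∧ ∀ i, j i < a + 1 := by
  simp [antitone_iff_forall_lt, Fin.forall_fin_succ, Order.lt_add_one_iff, and_comm]

open Classical in
lemma hasSum_antitone_cons {n : ℕ} {T : (Fin n → ℕ) → ℝ} {S φ : ℕ → ℝ} (hT : ∀ j, 0 ≤ T j)
    (hS : ∀ b, HasSum (fun j => if Antitone j ∧ ∀ i, j i < b then T j else 0) (S b))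
    (hφ : Summable fun a => φ a * S (a + 1)) :
    HasSum (fun j : Fin (n + 1) → ℕ => if Antitone j then φ (j 0) * T (Fin.tail j) else 0)
      (∑' a, φ a * S (a + 1)) := by
  set f : ℕ × (Fin n → ℕ) → ℝ := fun p =>
    φ p.1 * if Antitone p.2 ∧ ∀ i, p.2 i < p.1 + 1 then T p.2 else 0
  have hfiber (a : ℕ) : HasSum (fun j => f (a, j)) (φ a * S (a + 1)) := (hS (a + 1)).mul_left _
  have hnorm (a : ℕ) : HasSum (fun j => |f (a, j)|) (|φ a| * S (a + 1)) := by
    refine ((hS (a + 1)).mul_left |φ a|).congr_fun fun j => ?_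
    rw [abs_mul, abs_of_nonneg (a := ite _ _ _) (by split_ifs <;> simp [hT])]
  have hS0 (b : ℕ) : 0 ≤ S b := (hS b).nonneg fun j => by split_ifs <;> simp [hT]
  have hf : Summable f := by
    refine Summable.of_abs ((summable_prod_of_nonneg fun _ => abs_nonneg _).2
      ⟨fun a => (hnorm a).summable, hφ.abs.congr fun a => ?_⟩)
    rw [(hnorm a).tsum_eq, abs_mul, abs_of_nonneg (hS0 _)]
  have hprod := hf.hasSum.prod_fiberwise hfiber
  rw [hprod.tsum_eq, ← (Fin.consEquiv fun _ => ℕ).hasSum_iff]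
  refine hf.hasSum.congr_fun fun p => ?_
  simp [f, Fin.consEquiv, antitone_finCons_iff]

open Classical in
theorem hasSum_starSum_antitone {t : α → ℕ → ℝ} (ht : ∀ a j, 0 ≤ t a j) (L : List α) (b : ℕ) :
    HasSum (fun j : Fin L.length → ℕ =>
      if Antitone j ∧ ∀ i, j i < b then ∏ i, t (L.get i) (j i) else 0) (starSum t L b) := by
  induction L generalizing b with
  | nil => simp [starSum, Subsingleton.antitone]
  | cons a L ih =>
    set φ : ℕ → ℝ := fun i => if i < b then t a i else 0 with hφ
    have hφsum : HasSum (fun i => φ i * starSum t L (i + 1)) (starSum t (a :: L) b) := by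
      have hvalue : starSum t (a :: L) b = ∑ i ∈ Finset.range b, φ i * starSum t L (i + 1) :=
        Finset.sum_congr rfl fun i hi => by
          simp only [hφ, if_pos (Finset.mem_range.1 hi)]
      rw [hvalue]
      exact hasSum_sum_of_ne_finset_zero fun i hi => by
        simp only [hφ, if_neg (mt Finset.mem_range.2 hi), zero_mul]
    rw [← hφsum.tsum_eq]
    refine (hasSum_antitone_cons (fun j => Finset.prod_nonneg fun i _ => ht _ _) ih
      hφsum.summable).congr_fun fun j => ?_
    have hbound (hj : Antitone j) : (∀ i, j i < b) ↔ j 0 < b :=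
      ⟨fun h => h 0, fun h i => (hj (Fin.zero_le i)).trans_lt h⟩
    by_cases hj : Antitone j
    · simp [hφ, hj, hbound hj, Fin.prod_univ_succ, Fin.tail, ite_mul]
    · simp [hj]

/-- The weight `m ^ (-k)` of the odd number `m = 2 * j + 1`. -/
noncomputable def oddInvPow (k j : ℕ) : ℝ := ((2 * j + 1) ^ k)⁻¹

lemma oddInvPow_nonneg (k j : ℕ) : 0 ≤ oddInvPow k j := by
  unfold oddInvPow; positivity

open Classical in
lemma LtStar_cons_eq_tsum_antitone (k : ℕ) (K : List ℕ) (z : ℝ) :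
    LtStar (k :: K) z = ∑' j : Fin (K.length + 1) → ℕ, if Antitone j then
      z ^ (2 * j 0 + 1) * oddInvPow k (j 0) * ∏ i, oddInvPow (K.get i) (Fin.tail j i) else 0 := by
  have hinj : Function.Injective fun (j : Fin (K.length + 1) → ℕ) i => 2 * j i + 1 :=
    fun j j' h => funext fun i => by simpa using congrFun h i
  refine (Function.Injective.tsum_eq hinj ?_).symm.trans (tsum_congr fun j => ?_)
  · intro m hm
    have hodd : ∀ i, Odd (m i) := by
      by_contra h
      exact hm (dif_neg fun hm' => h hm'.1)
    choose j hj using hodd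
    exact ⟨j, funext fun i => (hj i).symm⟩
  · have hanti : Antitone j ↔ ∀ i k, i < k → j k ≤ j i := antitone_iff_forall_lt
    simp [hanti, Fin.prod_univ_succ, oddInvPow, Fin.tail, mul_assoc, -Finset.prod_inv_distrib]

theorem LtStar_cons {k : ℕ} {K : List ℕ} {z : ℝ}
    (h : Summable fun i => z ^ (2 * i + 1) * oddInvPow k i * starSum oddInvPow K (i + 1)) :
    LtStar (k :: K) z =
      ∑' i, z ^ (2 * i + 1) * oddInvPow k i * starSum oddInvPow K (i + 1) := by
  rw [LtStar_cons_eq_tsum_antitone]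
  exact (hasSum_antitone_cons
    (fun j => Finset.prod_nonneg fun i _ => oddInvPow_nonneg _ _)
    (hasSum_starSum_antitone oddInvPow_nonneg K) h).tsum_eq

end Polylogarithm

section GeneratingFunction

open Filter Topology

lemma summable_prod_range_of_tendsto {𝕜 : Type*} [NormedField 𝕜] [CompleteSpace 𝕜] {q : ℕ → 𝕜}
    {l : 𝕜} (hq : Tendsto q atTop (𝓝 l)) (hl : ‖l‖ < 1) :
    Summable fun i => ∏ j ∈ Finset.range i, q j := by
  obtain ⟨r, hlr, hr⟩ := exists_between hl
  refine summable_of_ratio_norm_eventually_le hr ?_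
  filter_upwards [hq.norm.eventually_le_const hlr] with i hi
  rw [Finset.prod_range_succ, norm_mul, mul_comm]
  gcongr

lemma oddInvPow_le_one (k j : ℕ) : oddInvPow k j ≤ 1 :=
  inv_le_one_of_one_le₀ (one_le_pow₀ (by linarith [j.cast_nonneg (α := ℝ)]))

lemma tendsto_oddInvPow {k : ℕ} (hk : k ≠ 0) : Tendsto (oddInvPow k) atTop (𝓝 0) := by
  have hodd : Tendsto (fun j : ℕ => 2 * (j : ℝ) + 1) atTop atTop :=
    tendsto_atTop_add_const_right _ _ (tendsto_natCast_atTop_atTop.const_mul_atTop two_pos)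
  exact ((tendsto_pow_atTop hk).comp hodd).inv_tendsto_atTop

lemma norm_mul_oddInvPow_le (a : ℝ) (k j : ℕ) : ‖a * oddInvPow k j‖ ≤ ‖a‖ := by
  rw [norm_mul, Real.norm_of_nonneg (oddInvPow_nonneg k j)]
  exact mul_le_of_le_one_right (norm_nonneg a) (oddInvPow_le_one k j)

/-- The contribution of the index `k :: K` to the coefficient of `z ^ (2 * i + 1)` in the
generating function of the `LtStar (k :: K) z`, where the first entry of an index is weighted
by `y` and the other ones by `x`. -/
noncomputable def weightedTerm (x y : ℕ → ℝ) (i : ℕ) (p : ℕ × List ℕ) : ℝ :=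
  y p.1 * oddInvPow p.1 i * ((p.2.map x).prod * starSum oddInvPow p.2 (i + 1))

/-- The sum of `weightedTerm x y i` over all indices, in closed form. -/
noncomputable def weightedCoeff (x y : ℕ → ℝ) (i : ℕ) : ℝ :=
  (∑' k, y k * oddInvPow k i) * ∏ j ∈ Finset.range (i + 1), (1 - ∑' k, x k * oddInvPow k j)⁻¹

variable {x y : ℕ → ℝ}

lemma norm_weightedTerm (x y : ℕ → ℝ) (i : ℕ) (p : ℕ × List ℕ) :
    ‖weightedTerm x y i p‖ = weightedTerm (fun k => ‖x k‖) (fun k => ‖y k‖) i p := by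
  have hprod : ‖(p.2.map x).prod‖ = (p.2.map fun k => ‖x k‖).prod := by
    induction p.2 with
    | nil => simp
    | cons k K ih => simp [ih]
  simp only [weightedTerm, norm_mul, hprod, Real.norm_of_nonneg (oddInvPow_nonneg _ _),
    Real.norm_of_nonneg (starSum_nonneg oddInvPow_nonneg _ _)]

lemma summable_norm_mul_oddInvPow (hx : Summable fun k => ‖x k‖) (j : ℕ) :
    Summable fun k => ‖x k * oddInvPow k j‖ :=
  hx.of_nonneg_of_le (fun _ => norm_nonneg _) fun k => norm_mul_oddInvPow_le (x k) k j

lemma tsum_norm_mul_oddInvPow_le (hx : Summable fun k => ‖x k‖) (j : ℕ) :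
    ∑' k, ‖x k * oddInvPow k j‖ ≤ ∑' k, ‖x k‖ :=
  (summable_norm_mul_oddInvPow hx j).tsum_le_tsum (fun k => norm_mul_oddInvPow_le (x k) k j) hx

theorem hasSum_weightedTerm (hx : Summable fun k => ‖x k‖) (hx1 : ∑' k, ‖x k‖ < 1)
    (hy : Summable fun k => ‖y k‖) (i : ℕ) :
    HasSum (weightedTerm x y i) (weightedCoeff x y i) := by
  have hxt := summable_norm_mul_oddInvPow hx
  have hxt1 (j : ℕ) : ∑' k, ‖x k * oddInvPow k j‖ < 1 :=
    (tsum_norm_mul_oddInvPow_le hx j).trans_lt hx1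
  have hyt := summable_norm_mul_oddInvPow hy i
  have hstar := summable_norm_starSum hxt hxt1 (i + 1)
  have hmul := hyt.of_norm.hasSum.mul hstar.of_norm.hasSum (summable_mul_of_summable_norm hyt hstar)
  rw [(hasSum_starSum hxt hxt1 (i + 1)).tsum_eq] at hmul
  simp only [starSum_smul] at hmul
  exact hmul

lemma tendsto_tsum_mul_oddInvPow (hx0 : x 0 = 0) (hx : Summable fun k => ‖x k‖) :
    Tendsto (fun j => ∑' k, x k * oddInvPow k j) atTop (𝓝 0) := by
  have hterm (k : ℕ) : Tendsto (fun j => x k * oddInvPow k j) atTop (𝓝 0) := by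
    rcases eq_or_ne k 0 with rfl | hk
    · simp [hx0]
    · simpa using (tendsto_oddInvPow hk).const_mul (x k)
  simpa using tendsto_tsum_of_dominated_convergence hx hterm
    (Eventually.of_forall fun j k => norm_mul_oddInvPow_le (x k) k j)

lemma summable_weightedCoeff_mul_pow (hx0 : x 0 = 0) (hx : Summable fun k => ‖x k‖)
    (hy : Summable fun k => ‖y k‖) {z : ℝ} (hz : ‖z‖ < 1) :
    Summable fun i => weightedCoeff x y i * z ^ (2 * i + 1) := by
  set q : ℕ → ℝ := fun j => (1 - ∑' k, x k * oddInvPow k j)⁻¹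
  have hq : Tendsto q atTop (𝓝 1) := by
    simpa using ((tendsto_tsum_mul_oddInvPow hx0 hx).const_sub 1).inv₀ (by simp)
  have hqz : Tendsto (fun j => q (j + 1) * z ^ 2) atTop (𝓝 (z ^ 2)) := by
    simpa using ((tendsto_add_atTop_iff_nat 1).2 hq).mul_const (z ^ 2)
  have hprod : Summable fun i => (∏ j ∈ Finset.range (i + 1), q j) * z ^ (2 * i + 1) := by
    refine ((summable_prod_range_of_tendsto hqz ?_).mul_right (q 0 * z)).congr fun i => ?_
    · simpa using hz
    · rw [Finset.prod_range_succ', Finset.prod_mul_distrib, Finset.prod_const, Finset.card_range]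
      ring
  have hbound (i : ℕ) : ‖∑' k, y k * oddInvPow k i‖ ≤ ∑' k, ‖y k‖ :=
    (norm_tsum_le_tsum_norm (summable_norm_mul_oddInvPow hy i)).trans
      (tsum_norm_mul_oddInvPow_le hy i)
  refine .of_norm_bounded (hprod.norm.mul_left (∑' k, ‖y k‖)) fun i => ?_
  rw [weightedCoeff, mul_assoc, norm_mul]
  exact mul_le_mul_of_nonneg_right (hbound i) (norm_nonneg _)

lemma summable_weightedTerm_mul_pow (hx0 : x 0 = 0) (hx : Summable fun k => ‖x k‖)
    (hx1 : ∑' k, ‖x k‖ < 1) (hy : Summable fun k => ‖y k‖) {z : ℝ} (hz : ‖z‖ < 1) :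
    Summable fun q : ℕ × ℕ × List ℕ => weightedTerm x y q.1 q.2 * z ^ (2 * q.1 + 1) := by
  have hfiber (i : ℕ) : HasSum (fun p => ‖weightedTerm x y i p * z ^ (2 * i + 1)‖)
      (weightedCoeff (fun k => ‖x k‖) (fun k => ‖y k‖) i * ‖z‖ ^ (2 * i + 1)) := by
    simp only [norm_mul, norm_weightedTerm, norm_pow]
    exact (hasSum_weightedTerm hx.norm (by simpa only [norm_norm]) hy.norm i).mul_right _
  refine Summable.of_norm ((summable_prod_of_nonneg fun _ => norm_nonneg _).2
    ⟨fun i => (hfiber i).summable, ?_⟩)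
  simp only [(hfiber _).tsum_eq]
  exact summable_weightedCoeff_mul_pow (by simpa) hx.norm hy.norm (by simpa)

theorem hasSum_mul_LtStar (hx0 : x 0 = 0) (hx : Summable fun k => ‖x k‖)
    (hx1 : ∑' k, ‖x k‖ < 1) (hy : Summable fun k => ‖y k‖) {z : ℝ} (hz : ‖z‖ < 1) :
    HasSum (fun p : ℕ × List ℕ => y p.1 * (p.2.map x).prod * LtStar (p.1 :: p.2) z)
      (∑' i, weightedCoeff x y i * z ^ (2 * i + 1)) := by
  have hsum := summable_weightedTerm_mul_pow hx0 hx hx1 hy hz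
  have hvalue := (hsum.hasSum.prod_fiberwise fun i =>
    (hasSum_weightedTerm hx hx1 hy i).mul_right (z ^ (2 * i + 1))).tsum_eq
  have hswap := hsum.prod_symm
  rw [hvalue, ← (Equiv.prodComm _ _).tsum_eq]
  refine hswap.hasSum.prod_fiberwise fun p => ?_
  have hterm (i : ℕ) : weightedTerm x y i p * z ^ (2 * i + 1) = y p.1 * (p.2.map x).prod *
      (z ^ (2 * i + 1) * oddInvPow p.1 i * starSum oddInvPow p.2 (i + 1)) := by
    rw [weightedTerm]; ring
  have hp := hswap.prod_factor p
  simp only [Prod.swap, hterm] at hp ⊢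
  by_cases hc : y p.1 * (p.2.map x).prod = 0
  · simp only [hc, zero_mul, hasSum_zero]
  · rw [summable_mul_left_iff hc] at hp
    rw [LtStar_cons hp]
    exact hp.hasSum.mul_left _

end GeneratingFunction

section IndexWeight

/-- The weight of the first entry of an admissible index: `u ^ (k - 2)` for an
entry `k ≥ 2`, and `0` otherwise. -/
def headWeight (u : ℝ) : ℕ → ℝ
  | k + 2 => u ^ k
  | _ => 0

/-- The weight of a further entry of an index: an entry `1` adds one to `n - s`, and an entry
`k ≥ 2` adds one to `s` and `k - 2` to `k - n - s`. -/
def entryWeight (u v w : ℝ) (k : ℕ) : ℝ :=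
  if k = 1 then v else w * headWeight u k

/-- The monomial `u ^ (k - n - s) * v ^ (n - s) * w ^ (s - 1)` attached to an admissible index of
weight `k`, depth `n` and height `s`, as a product over the entries of the index. -/
def indexWeight (u v w : ℝ) : List ℕ → ℝ
  | [] => 0
  | k :: K => headWeight u k * (K.map (entryWeight u v w)).prod

/-- The number of entries of an index that are at least `2`. -/
abbrev height (K : List ℕ) : ℕ := K.countP fun i => decide (2 ≤ i)

/-- The exponents `(k - n - s, n - s, s - 1)` of an index of weight `k`, depth `n` and height `s`.
The subtractions are exact on admissible indices. -/
def exponents (K : List ℕ) : ℕ × ℕ × ℕ :=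
  (K.sum - K.length - height K, K.length - height K, height K - 1)

variable {u v w : ℝ} {K : List ℕ}

lemma height_one_cons (K : List ℕ) : height (1 :: K) = height K :=
  List.countP_cons_of_neg (by decide)

lemma height_add_two_cons (k : ℕ) (K : List ℕ) : height ((k + 2) :: K) = height K + 1 :=
  List.countP_cons_of_pos (by simp)

lemma exists_prod_entryWeight_eq (u v w : ℝ) (hK : ∀ i ∈ K, 1 ≤ i) :
    ∃ a b, K.sum = a + b + 2 * height K ∧ K.length = b + height K ∧
      (K.map (entryWeight u v w)).prod = u ^ a * v ^ b * w ^ height K := by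
  induction K with
  | nil => exact ⟨0, 0, by simp⟩
  | cons k K ih =>
    obtain ⟨hk, hK⟩ := List.forall_mem_cons.1 hK
    obtain ⟨a, b, hsum, hlen, hprod⟩ := ih hK
    simp only [List.sum_cons, List.length_cons, List.map_cons, List.prod_cons, hprod]
    match k, hk with
    | 1, _ =>
      refine ⟨a, b + 1, ?_, ?_, ?_⟩ <;> rw [height_one_cons]
      · omega
      · omega
      · rw [entryWeight, if_pos rfl]; ring
    | k + 2, _ =>
      refine ⟨a + k, b, ?_, ?_, ?_⟩ <;> rw [height_add_two_cons]
      · omega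
      · omega
      · rw [entryWeight, if_neg (by omega), headWeight]; ring

lemma Admissible.exists_indexWeight_eq (u v w : ℝ) (hK : Admissible K) :
    ∃ p : ℕ × ℕ × ℕ, K.sum = p.1 + p.2.1 + 2 * p.2.2 + 2 ∧ K.length = p.2.1 + p.2.2 + 1 ∧
      height K = p.2.2 + 1 ∧ indexWeight u v w K = u ^ p.1 * v ^ p.2.1 * w ^ p.2.2 := by
  obtain ⟨hpos, hhead⟩ := hK
  match K, hpos, hhead with
  | (k + 2) :: K, hpos, _ =>
    obtain ⟨a, b, hsum, hlen, hprod⟩ :=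
      exists_prod_entryWeight_eq u v w (List.forall_mem_cons.1 hpos).2
    refine ⟨(a + k, b, height K), ?_, ?_, height_add_two_cons k K, ?_⟩
    · rw [List.sum_cons, hsum]; ring
    · rw [List.length_cons, hlen]
    · rw [indexWeight, headWeight, hprod]; ring

lemma indexWeight_of_not_admissible (hK : ¬ Admissible K) : indexWeight u v w K = 0 := by
  match K, hK with
  | [], _ => rfl
  | 0 :: K, _ => simp [indexWeight, headWeight]
  | 1 :: K, _ => simp [indexWeight, headWeight]
  | (k + 2) :: K, hK =>
    have hzero : 0 ∈ K := by
      by_contra h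
      refine hK ⟨List.forall_mem_cons.2 ⟨by omega, fun i hi => ?_⟩, Nat.le_add_left 2 k⟩
      exact Nat.one_le_iff_ne_zero.2 fun hi0 => h (hi0 ▸ hi)
    have hprod : (K.map (entryWeight u v w)).prod = 0 :=
      List.prod_eq_zero (List.mem_map.2 ⟨0, hzero, by simp [entryWeight, headWeight]⟩)
    rw [indexWeight, hprod, mul_zero]

lemma Admissible.exponents_eq_iff (hK : Admissible K) (p : ℕ × ℕ × ℕ) :
    exponents K = p ↔ K.sum = p.1 + p.2.1 + 2 * p.2.2 + 2 ∧ K.length = p.2.1 + p.2.2 + 1 ∧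
      height K = p.2.2 + 1 := by
  obtain ⟨q, hsum, hlen, hheight, -⟩ := hK.exists_indexWeight_eq 0 0 0
  simp only [exponents, hsum, hlen, hheight, Prod.ext_iff]
  omega

lemma Admissible.indexWeight_eq (hK : Admissible K) : indexWeight u v w K =
    u ^ (exponents K).1 * v ^ (exponents K).2.1 * w ^ (exponents K).2.2 := by
  obtain ⟨p, hsum, hlen, hheight, hweight⟩ := hK.exists_indexWeight_eq u v w
  rw [hweight, (hK.exponents_eq_iff p).2 ⟨hsum, hlen, hheight⟩]

lemma hasSum_headWeight_mul_inv_pow {m : ℝ} (hu : ‖u‖ < m) :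
    HasSum (fun k => headWeight u k * (m ^ k)⁻¹) (m * (m - u))⁻¹ := by
  have hm : 0 < m := (norm_nonneg u).trans_lt hu
  have hmu : m - u ≠ 0 := (sub_pos.2 ((le_abs_self u).trans_lt hu)).ne'
  have hratio : ‖u / m‖ < 1 := by
    rwa [norm_div, Real.norm_of_nonneg hm.le, div_lt_one hm]
  have hvalue : (m * (m - u))⁻¹ - ∑ k ∈ Finset.range 2, headWeight u k * (m ^ k)⁻¹ =
      (m ^ 2)⁻¹ * (1 - u / m)⁻¹ := by
    simp only [Finset.sum_range_succ, Finset.sum_range_zero, headWeight]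
    field_simp
    ring
  rw [← hasSum_nat_add_iff' 2, hvalue]
  refine ((hasSum_geometric_of_norm_lt_one hratio).mul_left _).congr_fun fun k => ?_
  rw [headWeight, div_pow, pow_add, mul_inv]
  ring

lemma hasSum_entryWeight_mul_inv_pow (v w : ℝ) {m : ℝ} (hu : ‖u‖ < m) :
    HasSum (fun k => entryWeight u v w k * (m ^ k)⁻¹) (v / m + w / (m * (m - u))) := by
  have hone : HasSum (fun k => (if k = 1 then v else 0) * (m ^ k)⁻¹) (v / m) := by
    have hvalue : v / m = (if (1 : ℕ) = 1 then v else 0) * (m ^ 1)⁻¹ := by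
      rw [if_pos rfl, pow_one, div_eq_mul_inv]
    rw [hvalue]
    exact hasSum_single 1 fun k hk => by rw [if_neg hk, zero_mul]
  rw [div_eq_mul_inv w]
  refine (hone.add ((hasSum_headWeight_mul_inv_pow hu).mul_left w)).congr_fun fun k => ?_
  by_cases hk : k = 1
  · simp [entryWeight, headWeight, hk]
  · simp [entryWeight, hk, mul_assoc]

lemma norm_headWeight (u : ℝ) (k : ℕ) : ‖headWeight u k‖ = headWeight ‖u‖ k := by
  unfold headWeight; split <;> simp

lemma norm_entryWeight (u v w : ℝ) (k : ℕ) :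
    ‖entryWeight u v w k‖ = entryWeight ‖u‖ ‖v‖ ‖w‖ k := by
  unfold entryWeight
  split_ifs
  · rfl
  · rw [norm_mul, norm_headWeight]

lemma summable_norm_headWeight (hu : ‖u‖ < 1) : Summable fun k => ‖headWeight u k‖ := by
  have h := (hasSum_headWeight_mul_inv_pow (u := ‖u‖) (m := 1) (by rwa [norm_norm])).summable
  simpa only [norm_headWeight, one_pow, inv_one, mul_one] using h

lemma hasSum_norm_entryWeight (v w : ℝ) (hu : ‖u‖ < 1) :
    HasSum (fun k => ‖entryWeight u v w k‖) (‖v‖ + ‖w‖ / (1 - ‖u‖)) := by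
  have h := hasSum_entryWeight_mul_inv_pow (u := ‖u‖) ‖v‖ ‖w‖ (m := 1) (by rwa [norm_norm])
  simpa only [norm_entryWeight, one_pow, inv_one, mul_one, div_one, one_mul] using h

lemma odd_mul_sub_pos (hu : ‖u‖ < 1) (j : ℕ) : 0 < (2 * j + 1 : ℝ) * (2 * j + 1 - u) := by
  have hodd : (1 : ℝ) ≤ 2 * j + 1 := by linarith [j.cast_nonneg (α := ℝ)]
  exact mul_pos (one_pos.trans_le hodd) (by linarith [Real.le_norm_self u])

lemma hasSum_headWeight_mul_oddInvPow (hu : ‖u‖ < 1) (j : ℕ) :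
    HasSum (fun k => headWeight u k * oddInvPow k j) ((2 * j + 1) * (2 * j + 1 - u))⁻¹ :=
  hasSum_headWeight_mul_inv_pow (hu.trans_le (by linarith [j.cast_nonneg (α := ℝ)]))

lemma hasSum_entryWeight_mul_oddInvPow (v w : ℝ) (hu : ‖u‖ < 1) (j : ℕ) :
    HasSum (fun k => entryWeight u v w k * oddInvPow k j)
      (v / (2 * j + 1) + w / ((2 * j + 1) * (2 * j + 1 - u))) :=
  hasSum_entryWeight_mul_inv_pow v w (hu.trans_le (by linarith [j.cast_nonneg (α := ℝ)]))

end IndexWeight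

section DifferentialEquation

variable {u v w : ℝ}

/-- The generating function `Φ₀*(z)` of the `G₀*(k,n,s;z)`, indexed by the exponents
`(k - n - s, n - s, s - 1)` of `u`, `v` and `w`. -/
noncomputable def phi0Star (u v w z : ℝ) : ℝ :=
  ∑' p : ℕ × ℕ × ℕ,
    G0hzStar (p.1 + p.2.1 + 2 * p.2.2 + 2) (p.2.1 + p.2.2 + 1) (p.2.2 + 1) z
      * u ^ p.1 * v ^ p.2.1 * w ^ p.2.2

/-- The coefficient of `z ^ (2 * i + 1)` in `Φ₀*(z)`. -/
noncomputable def phi0StarCoeff (u v w : ℝ) : ℕ → ℝ :=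
  weightedCoeff (entryWeight u v w) (headWeight u)

lemma G0hzStar_mul_eq_tsum (u v w z : ℝ) (p : ℕ × ℕ × ℕ) :
    G0hzStar (p.1 + p.2.1 + 2 * p.2.2 + 2) (p.2.1 + p.2.2 + 1) (p.2.2 + 1) z
      * u ^ p.1 * v ^ p.2.1 * w ^ p.2.2 =
    ∑' K : exponents ⁻¹' {p}, indexWeight u v w K * LtStar K z := by
  rw [tsum_subtype (exponents ⁻¹' {p}) fun K => indexWeight u v w K * LtStar K z,
    mul_assoc, mul_assoc, G0hzStar, ← tsum_mul_right]
  refine tsum_congr fun K => ?_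
  classical
  rw [Set.indicator_apply, Set.mem_preimage, Set.mem_singleton_iff]
  by_cases hK : Admissible K
  · by_cases hp : exponents K = p
    · rw [if_pos ⟨hK, (hK.exponents_eq_iff p).1 hp⟩, if_pos hp, hK.indexWeight_eq, hp]
      ring
    · rw [if_neg (mt (fun h => (hK.exponents_eq_iff p).2 h.2) hp), if_neg hp, zero_mul]
  · simp [hK, indexWeight_of_not_admissible hK]

theorem tsum_indexWeight_mul_LtStar {z : ℝ}
    (h : Summable fun K => indexWeight u v w K * LtStar K z) :
    ∑' K, indexWeight u v w K * LtStar K z = phi0Star u v w z := by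
  rw [← (h.hasSum.tsum_fiberwise exponents).tsum_eq]
  exact tsum_congr fun p => (G0hzStar_mul_eq_tsum u v w z p).symm

lemma tsum_norm_entryWeight_lt_one (hu : ‖u‖ < 1) (hw : ‖w‖ < (1 - ‖u‖) * (1 - ‖v‖)) :
    ∑' k, ‖entryWeight u v w k‖ < 1 := by
  rw [(hasSum_norm_entryWeight v w hu).tsum_eq, ← lt_sub_iff_add_lt', div_lt_iff₀' (sub_pos.2 hu)]
  exact hw

theorem hasSum_phi0StarCoeff_mul_pow (hu : ‖u‖ < 1) (hw : ‖w‖ < (1 - ‖u‖) * (1 - ‖v‖))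
    {z : ℝ} (hz : ‖z‖ < 1) :
    HasSum (fun i => phi0StarCoeff u v w i * z ^ (2 * i + 1)) (phi0Star u v w z) := by
  have hx0 : entryWeight u v w 0 = 0 := by simp [entryWeight, headWeight]
  have hx := (hasSum_norm_entryWeight v w hu).summable
  have hx1 := tsum_norm_entryWeight_lt_one hu hw
  have hy := summable_norm_headWeight hu
  have hindex : HasSum (fun K => indexWeight u v w K * LtStar K z)
      (indexWeight u v w [] * LtStar [] z + ∑' i, phi0StarCoeff u v w i * z ^ (2 * i + 1)) :=
    hasSum_list_of_hasSum_cons (hasSum_mul_LtStar hx0 hx hx1 hy hz)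
  rw [← tsum_indexWeight_mul_LtStar hindex.summable, hindex.tsum_eq, indexWeight, zero_mul,
    zero_add]
  exact (summable_weightedCoeff_mul_pow hx0 hx hy hz).hasSum

lemma phi0StarCoeff_mul (v w : ℝ) (hu : ‖u‖ < 1) (i : ℕ) :
    phi0StarCoeff u v w i * ((2 * i + 1) * (2 * i + 1 - u)) =
      ∏ j ∈ Finset.range (i + 1), (1 - ∑' k, entryWeight u v w k * oddInvPow k j)⁻¹ := by
  have hm : (2 * i + 1 : ℝ) * (2 * i + 1 - u) ≠ 0 := (odd_mul_sub_pos hu i).ne'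
  rw [phi0StarCoeff, weightedCoeff, (hasSum_headWeight_mul_oddInvPow hu i).tsum_eq, mul_right_comm,
    inv_mul_cancel₀ hm, one_mul]

lemma phi0StarCoeff_mul_quadratic (hu : ‖u‖ < 1) (hw : ‖w‖ < (1 - ‖u‖) * (1 - ‖v‖)) (i : ℕ) :
    phi0StarCoeff u v w i * ((2 * i + 1 - u) * (2 * i + 1 - v) - w) =
      ∏ j ∈ Finset.range i, (1 - ∑' k, entryWeight u v w k * oddInvPow k j)⁻¹ := by
  have hm : (2 * i + 1 : ℝ) * (2 * i + 1 - u) ≠ 0 := (odd_mul_sub_pos hu i).ne'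
  have hx := (hasSum_norm_entryWeight v w hu).summable
  have hne := one_sub_tsum_ne_zero (summable_norm_mul_oddInvPow hx i)
    ((tsum_norm_mul_oddInvPow_le hx i).trans_lt (tsum_norm_entryWeight_lt_one hu hw))
  have hquadratic : (2 * i + 1 - u) * (2 * i + 1 - v) - w = (2 * i + 1) * (2 * i + 1 - u) *
      (1 - ∑' k, entryWeight u v w k * oddInvPow k i) := by
    rw [(hasSum_entryWeight_mul_oddInvPow v w hu i).tsum_eq]
    obtain ⟨hm₁, hm₂⟩ := mul_ne_zero_iff.1 hm
    field_simp
    ring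
  rw [hquadratic, ← mul_assoc, phi0StarCoeff_mul v w hu, Finset.prod_range_succ,
    inv_mul_cancel_right₀ hne]

theorem phi0_star_differential_equation_general (hu : |u| < 1)
    (hw : |w| < (1 - |u|) * (1 - |v|)) {z : ℝ} (hz : |z| < 1) :
    z ^ 2 * (1 - z ^ 2) * deriv (deriv (phi0Star u v w)) z
      + ((1 - u) * z * (1 - z ^ 2) - v * z) * deriv (phi0Star u v w) z
      + (u * v - w) * phi0Star u v w z = z := by
  refine differential_equation_of_recurrence (R := 1) (a := phi0StarCoeff u v w)
    (fun x hx => hasSum_phi0StarCoeff_mul_pow hu hw hx) ?_ (fun i => ?_) hz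
  · simpa using phi0StarCoeff_mul_quadratic hu hw 0
  · rw [phi0StarCoeff_mul v w hu, ← phi0StarCoeff_mul_quadratic hu hw]
    push_cast
    ring

end DifferentialEquation

/-- The generating function `Φ₀*(z)` of the sums `G₀*(k,n,s;z)` of one-variable star
multiple polylogarithms satisfies the differential equation
`z²(1-z²)(Φ₀*)'' + [(1-u)z(1-z²) - vz](Φ₀*)' + (uv-w)Φ₀* = z` on `(0,1)` (Proposition 3.3). -/
theorem phi0_star_differential_equation :
    ∃ δ > (0 : ℝ), ∀ u v w : ℝ, |u| < δ → |v| < δ → |w| < δ →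
      ∀ z ∈ Set.Ioo (0 : ℝ) 1,
        (fun Φ₀s : ℝ → ℝ =>
          z ^ 2 * (1 - z ^ 2) * deriv (deriv Φ₀s) z
            + ((1 - u) * z * (1 - z ^ 2) - v * z) * deriv Φ₀s z
            + (u * v - w) * Φ₀s z = z)
        (fun z : ℝ => ∑' p : ℕ × ℕ × ℕ,
          G0hzStar (p.1 + p.2.1 + 2 * p.2.2 + 2) (p.2.1 + p.2.2 + 1) (p.2.2 + 1) z
            * u ^ p.1 * v ^ p.2.1 * w ^ p.2.2) := by
  exact ⟨1 / 4, by norm_num, fun u v w hu hv hw z hz => phi0_star_differential_equation_general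
    (by linarith) (by nlinarith) (abs_lt.2 ⟨by linarith [hz.1], hz.2⟩)⟩
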